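/- Every labelled sequent derivable in the quasi-refined calculus IntQL* is derivable in G3IntQ, and every labelled sequent derivable in IntQCL* is derivable in G3IntQC. -/

import Mathlib

/-!
Labelled sequent calculi for first-order intuitionistic logics.
-/

namespace IntFOL

/-- Terms: parameters and (de Bruijn) bound variables. -/
inductive ITerm : Type
  | param : ℕ → ITerm
  | bvar : ℕ → ITerm

/-- First-order formulae built from atomic formulae and `⊥` by
`∧`, `∨`, `⊃`, `∃`, `∀` (quantifiers in de Bruijn style). -/
inductive IFml : Type
  | atom : ℕ → List ITerm → IFml
  | bot : IFml
  | and : IFml → IFml → IFml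
  | or : IFml → IFml → IFml
  | imp : IFml → IFml → IFml
  | all : IFml → IFml
  | ex : IFml → IFml

/-- Instantiate the bound variable of index `d` by the parameter `a` in a term. -/
def instT (a d : ℕ) : ITerm → ITerm
  | ITerm.param b => ITerm.param b
  | ITerm.bvar m => if m = d then ITerm.param a else ITerm.bvar m

/-- Instantiate the bound variable of index `d` by the parameter `a`. -/
def instF (a : ℕ) : ℕ → IFml → IFml
  | d, IFml.atom P ts => IFml.atom P (ts.map (instT a d))
  | _, IFml.bot => IFml.bot
  | d, IFml.and φ ψ => IFml.and (instF a d φ) (instF a d ψ)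
  | d, IFml.or φ ψ => IFml.or (instF a d φ) (instF a d ψ)
  | d, IFml.imp φ ψ => IFml.imp (instF a d φ) (instF a d ψ)
  | d, IFml.all φ => IFml.all (instF a (d + 1) φ)
  | d, IFml.ex φ => IFml.ex (instF a (d + 1) φ)

/-- `open0 φ a` is the substitution `φ(a/x)` of the parameter `a` for the
variable bound by the outermost (removed) quantifier. -/
def open0 (φ : IFml) (a : ℕ) : IFml := instF a 0 φ

/-- The parameter `a` occurs in a term. -/
def pT (a : ℕ) : ITerm → Prop
  | ITerm.param b => b = a
  | ITerm.bvar _ => False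

/-- The parameter `a` occurs in a formula. -/
def pF (a : ℕ) : IFml → Prop
  | IFml.atom _ ts => ∃ t ∈ ts, pT a t
  | IFml.bot => False
  | IFml.and φ ψ => pF a φ ∨ pF a ψ
  | IFml.or φ ψ => pF a φ ∨ pF a ψ
  | IFml.imp φ ψ => pF a φ ∨ pF a ψ
  | IFml.all φ => pF a φ
  | IFml.ex φ => pF a φ

/-- All bound-variable indices of a term are below `k`. -/
def lcT (k : ℕ) : ITerm → Prop
  | ITerm.param _ => True
  | ITerm.bvar m => m < k

/-- All free bound-variable indices of a formula are below `k`;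
`lcF 0 φ` says that `φ` has no free (bound) variables. -/
def lcF : ℕ → IFml → Prop
  | k, IFml.atom _ ts => ∀ t ∈ ts, lcT k t
  | _, IFml.bot => True
  | k, IFml.and φ ψ => lcF k φ ∧ lcF k ψ
  | k, IFml.or φ ψ => lcF k φ ∧ lcF k ψ
  | k, IFml.imp φ ψ => lcF k φ ∧ lcF k ψ
  | k, IFml.all φ => lcF (k + 1) φ
  | k, IFml.ex φ => lcF (k + 1) φ

/-- Multisets of labelled formulae `w : φ`. -/
abbrev LSeq : Type := Multiset (ℕ × IFml)

/-- Edges of the propagation graph determined by the relational atoms `w ≤ u`: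
`true` encodes the character `a` (a forward move) and `false` its converse `ā`. -/
def IEdge (Rle : Multiset (ℕ × ℕ)) (w u : ℕ) (c : Bool) : Prop :=
  if c then (w, u) ∈ Rle else (u, w) ∈ Rle

/-- Propagation paths in the propagation graph, with their strings. -/
inductive BPath (Rle : Multiset (ℕ × ℕ)) : ℕ → ℕ → List Bool → Prop
  | nil (w : ℕ) : BPath Rle w w []
  | cons {w u v : ℕ} {c : Bool} {s : List Bool} :
      IEdge Rle w u c → BPath Rle u v s → BPath Rle w v (c :: s)

/-- One-step rewriting for string rewriting systems over the alphabet `{a, ā}`. -/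
def OneStepB (P : Set (Bool × List Bool)) (s t : List Bool) : Prop :=
  ∃ u v x r, (x, r) ∈ P ∧ s = u ++ x :: v ∧ t = u ++ r ++ v

/-- `LangB P x s` iff `x →*_P s`. -/
def LangB (P : Set (Bool × List Bool)) (x : Bool) (s : List Bool) : Prop :=
  Relation.ReflTransGen (OneStepB P) [x] s

/-- The system `S4 := {a → ε, a → a·a, ā → ε, ā → ā·ā}`
(`true` is `a`, `false` is `ā`). -/
def S4sys : Set (Bool × List Bool) :=
  {(true, []), (true, [true, true]), (false, []), (false, [false, false])}

/-- The system `S5 := {a → ε, a → ā·a, ā → ε, ā → a·ā}`. -/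
def S5sys : Set (Bool × List Bool) :=
  {(true, []), (true, [false, true]), (false, []), (false, [true, false])}

/-- There is a propagation path `π(w,u)` with `s_π(w,u) ∈ L_{S4}(a)`. -/
def Cond4 (Rle : Multiset (ℕ × ℕ)) (w u : ℕ) : Prop :=
  ∃ s, BPath Rle w u s ∧ LangB S4sys true s

/-- There is a propagation path `π(w,u)` with `s_π(w,u) ∈ L_{S5}(a)`. -/
def Cond5 (Rle : Multiset (ℕ × ℕ)) (w u : ℕ) : Prop :=
  ∃ s, BPath Rle w u s ∧ LangB S5sys true s

/-- `Cond4` for the non-constant domain case (`cd = false`), `Cond5` for the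
constant domain case (`cd = true`). -/
def CondD (cd : Bool) (Rle : Multiset (ℕ × ℕ)) (w u : ℕ) : Prop :=
  if cd then Cond5 Rle w u else Cond4 Rle w u

/-- The label `v` occurs in the labelled sequent `R, Γ ⊢ Δ` (where the
antecedent `R` consists of the relational atoms `Rle` and domain atoms `Dom`,
a domain atom `a ∈ D_w` being encoded as the pair `(a, w)`). -/
def loccurs (v : ℕ) (Rle Dom : Multiset (ℕ × ℕ)) (Γ Δ : LSeq) : Prop :=
  (∃ w u, (w, u) ∈ Rle ∧ (v = w ∨ v = u)) ∨ (∃ a, (a, v) ∈ Dom) ∨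
    (∃ φ, (v, φ) ∈ Γ) ∨ ∃ φ, (v, φ) ∈ Δ

/-- The parameter `a` occurs in the labelled sequent. -/
def poccurs (a : ℕ) (Dom : Multiset (ℕ × ℕ)) (Γ Δ : LSeq) : Prop :=
  (∃ w, (a, w) ∈ Dom) ∨ (∃ w φ, (w, φ) ∈ Γ ∧ pF a φ) ∨ ∃ w φ, (w, φ) ∈ Δ ∧ pF a φ

/-- Gated labelled sequent calculi for first-order intuitionistic logics.
Sequents are `Rle, Dom, Γ ⊢ Δ`.  The rules `(⊥l)`, `(∧l)`, `(∧r)`, `(∨l)`,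
`(∨r)`, `(⊃r)`, `(∃l)`, `(∀r)` are always present; the rules `(id)`, `(⊃l)`,
`(∃r)`, `(∀l)` of `G3IntQ` are present exactly when `gOld` holds; the structural
rules `(ref)`, `(tra)`, `(nd)`, `(ned)` — and, when `cd = true`, `(cd)` — are
present exactly when `gStr` holds; and the rules `(id^X)`, `(Pr_⊃)`, `(∃r1^X)`,
`(∃r2^X)`, `(∀l1^X)`, `(∀l2^X)` of `R(Q)` (for `cd = false`) or `R(QC)` (for
`cd = true`) are present exactly when `gNew` holds.  In particular
`IDer false True True False` is `G3IntQ`, `IDer true True True False` is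
`G3IntQC`, `IDer false False False True` is `IntQL*` and
`IDer true False False True` is `IntQCL*`. -/
inductive IDer (cd : Bool) (gOld gStr gNew : Prop) :
    Multiset (ℕ × ℕ) → Multiset (ℕ × ℕ) → LSeq → LSeq → Prop
  | botl (Rle Dom : Multiset (ℕ × ℕ)) (Γ Δ : LSeq) (w : ℕ) :
      IDer cd gOld gStr gNew Rle Dom ((w, IFml.bot) ::ₘ Γ) Δ
  | andl {Rle Dom : Multiset (ℕ × ℕ)} {Γ Δ : LSeq} {w : ℕ} {φ ψ : IFml} :
      IDer cd gOld gStr gNew Rle Dom ((w, φ) ::ₘ (w, ψ) ::ₘ Γ) Δ →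
      IDer cd gOld gStr gNew Rle Dom ((w, IFml.and φ ψ) ::ₘ Γ) Δ
  | andr {Rle Dom : Multiset (ℕ × ℕ)} {Γ Δ : LSeq} {w : ℕ} {φ ψ : IFml} :
      IDer cd gOld gStr gNew Rle Dom Γ ((w, φ) ::ₘ Δ) →
      IDer cd gOld gStr gNew Rle Dom Γ ((w, ψ) ::ₘ Δ) →
      IDer cd gOld gStr gNew Rle Dom Γ ((w, IFml.and φ ψ) ::ₘ Δ)
  | orl {Rle Dom : Multiset (ℕ × ℕ)} {Γ Δ : LSeq} {w : ℕ} {φ ψ : IFml} :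
      IDer cd gOld gStr gNew Rle Dom ((w, φ) ::ₘ Γ) Δ →
      IDer cd gOld gStr gNew Rle Dom ((w, ψ) ::ₘ Γ) Δ →
      IDer cd gOld gStr gNew Rle Dom ((w, IFml.or φ ψ) ::ₘ Γ) Δ
  | orr {Rle Dom : Multiset (ℕ × ℕ)} {Γ Δ : LSeq} {w : ℕ} {φ ψ : IFml} :
      IDer cd gOld gStr gNew Rle Dom Γ ((w, φ) ::ₘ (w, ψ) ::ₘ Δ) →
      IDer cd gOld gStr gNew Rle Dom Γ ((w, IFml.or φ ψ) ::ₘ Δ)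
  | impr {Rle Dom : Multiset (ℕ × ℕ)} {Γ Δ : LSeq} {w u : ℕ} {φ ψ : IFml} :
      ¬ loccurs u Rle Dom Γ ((w, IFml.imp φ ψ) ::ₘ Δ) →
      IDer cd gOld gStr gNew ((w, u) ::ₘ Rle) Dom ((u, φ) ::ₘ Γ) ((u, ψ) ::ₘ Δ) →
      IDer cd gOld gStr gNew Rle Dom Γ ((w, IFml.imp φ ψ) ::ₘ Δ)
  | exl {Rle Dom : Multiset (ℕ × ℕ)} {Γ Δ : LSeq} {w a : ℕ} {φ : IFml} :
      ¬ poccurs a Dom ((w, IFml.ex φ) ::ₘ Γ) Δ →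
      IDer cd gOld gStr gNew Rle ((a, w) ::ₘ Dom) ((w, open0 φ a) ::ₘ Γ) Δ →
      IDer cd gOld gStr gNew Rle Dom ((w, IFml.ex φ) ::ₘ Γ) Δ
  | allr {Rle Dom : Multiset (ℕ × ℕ)} {Γ Δ : LSeq} {w u a : ℕ} {φ : IFml} :
      ¬ loccurs u Rle Dom Γ ((w, IFml.all φ) ::ₘ Δ) →
      ¬ poccurs a Dom Γ ((w, IFml.all φ) ::ₘ Δ) →
      IDer cd gOld gStr gNew ((w, u) ::ₘ Rle) ((a, u) ::ₘ Dom) Γ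
        ((u, open0 φ a) ::ₘ Δ) →
      IDer cd gOld gStr gNew Rle Dom Γ ((w, IFml.all φ) ::ₘ Δ)
  | id (h : gOld) {Rle Dom : Multiset (ℕ × ℕ)} {Γ Δ : LSeq} (w u P : ℕ)
      (as : List ℕ) :
      IDer cd gOld gStr gNew ((w, u) ::ₘ Rle)
        ((↑(as.map fun a => (a, w)) : Multiset (ℕ × ℕ)) + Dom)
        ((w, IFml.atom P (as.map ITerm.param)) ::ₘ Γ)
        ((u, IFml.atom P (as.map ITerm.param)) ::ₘ Δ)
  | impl (h : gOld) {Rle Dom : Multiset (ℕ × ℕ)} {Γ Δ : LSeq} {w u : ℕ}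
      {φ ψ : IFml} :
      IDer cd gOld gStr gNew ((w, u) ::ₘ Rle) Dom ((w, IFml.imp φ ψ) ::ₘ Γ)
        ((u, φ) ::ₘ Δ) →
      IDer cd gOld gStr gNew ((w, u) ::ₘ Rle) Dom
        ((w, IFml.imp φ ψ) ::ₘ (u, ψ) ::ₘ Γ) Δ →
      IDer cd gOld gStr gNew ((w, u) ::ₘ Rle) Dom ((w, IFml.imp φ ψ) ::ₘ Γ) Δ
  | exr (h : gOld) {Rle Dom : Multiset (ℕ × ℕ)} {Γ Δ : LSeq} {w a : ℕ}
      {φ : IFml} :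
      IDer cd gOld gStr gNew Rle ((a, w) ::ₘ Dom) Γ
        ((w, open0 φ a) ::ₘ (w, IFml.ex φ) ::ₘ Δ) →
      IDer cd gOld gStr gNew Rle ((a, w) ::ₘ Dom) Γ ((w, IFml.ex φ) ::ₘ Δ)
  | alll (h : gOld) {Rle Dom : Multiset (ℕ × ℕ)} {Γ Δ : LSeq} {w u a : ℕ}
      {φ : IFml} :
      IDer cd gOld gStr gNew ((w, u) ::ₘ Rle) ((a, u) ::ₘ Dom)
        ((u, open0 φ a) ::ₘ (w, IFml.all φ) ::ₘ Γ) Δ →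
      IDer cd gOld gStr gNew ((w, u) ::ₘ Rle) ((a, u) ::ₘ Dom)
        ((w, IFml.all φ) ::ₘ Γ) Δ
  | ref (h : gStr) {Rle Dom : Multiset (ℕ × ℕ)} {Γ Δ : LSeq} {w : ℕ} :
      IDer cd gOld gStr gNew ((w, w) ::ₘ Rle) Dom Γ Δ →
      IDer cd gOld gStr gNew Rle Dom Γ Δ
  | tra (h : gStr) {Rle Dom : Multiset (ℕ × ℕ)} {Γ Δ : LSeq} {w u v : ℕ} :
      IDer cd gOld gStr gNew ((w, u) ::ₘ (u, v) ::ₘ (w, v) ::ₘ Rle) Dom Γ Δ →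
      IDer cd gOld gStr gNew ((w, u) ::ₘ (u, v) ::ₘ Rle) Dom Γ Δ
  | nd (h : gStr) {Rle Dom : Multiset (ℕ × ℕ)} {Γ Δ : LSeq} {v w a : ℕ} :
      IDer cd gOld gStr gNew ((v, w) ::ₘ Rle) ((a, v) ::ₘ (a, w) ::ₘ Dom) Γ Δ →
      IDer cd gOld gStr gNew ((v, w) ::ₘ Rle) ((a, v) ::ₘ Dom) Γ Δ
  | ned (h : gStr) {Rle Dom : Multiset (ℕ × ℕ)} {Γ Δ : LSeq} {a w : ℕ} :
      ¬ poccurs a Dom Γ Δ →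
      IDer cd gOld gStr gNew Rle ((a, w) ::ₘ Dom) Γ Δ →
      IDer cd gOld gStr gNew Rle Dom Γ Δ
  | cdr (h : gStr) (hcd : cd = true) {Rle Dom : Multiset (ℕ × ℕ)} {Γ Δ : LSeq}
      {v w a : ℕ} :
      IDer cd gOld gStr gNew ((v, w) ::ₘ Rle) ((a, w) ::ₘ (a, v) ::ₘ Dom) Γ Δ →
      IDer cd gOld gStr gNew ((v, w) ::ₘ Rle) ((a, w) ::ₘ Dom) Γ Δ
  | idN (h : gNew) {Rle Dom : Multiset (ℕ × ℕ)} {Γ Δ : LSeq} (w u P : ℕ)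
      (aus : List (ℕ × ℕ)) :
      (∀ p ∈ aus, CondD cd Rle p.2 w) →
      Cond4 Rle w u →
      IDer cd gOld gStr gNew Rle ((↑aus : Multiset (ℕ × ℕ)) + Dom)
        ((w, IFml.atom P (aus.map fun p => ITerm.param p.1)) ::ₘ Γ)
        ((u, IFml.atom P (aus.map fun p => ITerm.param p.1)) ::ₘ Δ)
  | prImp (h : gNew) {Rle Dom : Multiset (ℕ × ℕ)} {Γ Δ : LSeq} {w u : ℕ}
      {φ ψ : IFml} :
      Cond4 Rle w u →
      IDer cd gOld gStr gNew Rle Dom ((w, IFml.imp φ ψ) ::ₘ Γ) ((u, φ) ::ₘ Δ) →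
      IDer cd gOld gStr gNew Rle Dom ((w, IFml.imp φ ψ) ::ₘ (u, ψ) ::ₘ Γ) Δ →
      IDer cd gOld gStr gNew Rle Dom ((w, IFml.imp φ ψ) ::ₘ Γ) Δ
  | exr1 (h : gNew) {Rle Dom : Multiset (ℕ × ℕ)} {Γ Δ : LSeq} {w u a : ℕ}
      {φ : IFml} :
      CondD cd Rle u w →
      IDer cd gOld gStr gNew Rle ((a, u) ::ₘ Dom) Γ
        ((w, open0 φ a) ::ₘ (w, IFml.ex φ) ::ₘ Δ) →
      IDer cd gOld gStr gNew Rle ((a, u) ::ₘ Dom) Γ ((w, IFml.ex φ) ::ₘ Δ)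
  | exr2 (h : gNew) {Rle Dom : Multiset (ℕ × ℕ)} {Γ Δ : LSeq} {w u a : ℕ}
      {φ : IFml} :
      CondD cd Rle u w →
      ¬ poccurs a Dom Γ ((w, IFml.ex φ) ::ₘ Δ) →
      IDer cd gOld gStr gNew Rle ((a, u) ::ₘ Dom) Γ
        ((w, open0 φ a) ::ₘ (w, IFml.ex φ) ::ₘ Δ) →
      IDer cd gOld gStr gNew Rle Dom Γ ((w, IFml.ex φ) ::ₘ Δ)
  | alll1 (h : gNew) {Rle Dom : Multiset (ℕ × ℕ)} {Γ Δ : LSeq} {w u v a : ℕ}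
      {φ : IFml} :
      CondD cd Rle u v → Cond4 Rle w v →
      IDer cd gOld gStr gNew Rle ((a, u) ::ₘ Dom)
        ((w, IFml.all φ) ::ₘ (v, open0 φ a) ::ₘ Γ) Δ →
      IDer cd gOld gStr gNew Rle ((a, u) ::ₘ Dom) ((w, IFml.all φ) ::ₘ Γ) Δ
  | alll2 (h : gNew) {Rle Dom : Multiset (ℕ × ℕ)} {Γ Δ : LSeq} {w u v a : ℕ}
      {φ : IFml} :
      CondD cd Rle u v → Cond4 Rle w v →
      ¬ poccurs a Dom ((w, IFml.all φ) ::ₘ Γ) Δ →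
      IDer cd gOld gStr gNew Rle ((a, u) ::ₘ Dom)
        ((w, IFml.all φ) ::ₘ (v, open0 φ a) ::ₘ Γ) Δ →
      IDer cd gOld gStr gNew Rle Dom ((w, IFml.all φ) ::ₘ Γ) Δ

/-! A propagation path is simulated in `G3IntQ(C)` by adding, bottom-up, the atoms it entails with
`(ref)`, `(tra)`, `(nd)` and `(cd)`. The premise of the refined rule must then be weakened by these
atoms, and the usual admissibility of weakening would require renaming eigenvariables. This is
avoided because the added atoms only mention labels and parameters that are already present: one
shows by induction that a sequent is derivable after adding *any* such atoms, and they never clash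
with the eigenvariables of the given derivation. -/

open Relation

/-- Derivability in `G3IntQ` (for `cd = false`) and in `G3IntQC` (for `cd = true`). -/
abbrev G3 (cd : Bool) : Multiset (ℕ × ℕ) → Multiset (ℕ × ℕ) → LSeq → LSeq → Prop :=
  IDer cd True True False

section Propagation

variable {cd : Bool} {R : Multiset (ℕ × ℕ)} {w u : ℕ} {s : List Bool}

theorem eq_of_mem_of_langB_S4sys {x : Bool} (h : LangB S4sys x s) : ∀ c ∈ s, c = x := by
  induction h with
  | refl => simp
  | tail _ hstep ih =>
    obtain ⟨u, v, y, r, hrule, rfl, rfl⟩ := hstep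
    have hr : ∀ c ∈ r, c = y := by
      simp only [S4sys, Set.mem_insert_iff, Set.mem_singleton_iff, Prod.mk.injEq] at hrule
      rcases hrule with ⟨rfl, rfl⟩ | ⟨rfl, rfl⟩ | ⟨rfl, rfl⟩ | ⟨rfl, rfl⟩ <;> simp
    simp only [List.mem_append, List.mem_cons] at ih ⊢
    grind

theorem BPath.reflTransGen {r : ℕ → ℕ → Prop} (p : BPath R w u s)
    (hr : ∀ x y, ∀ c ∈ s, IEdge R x y c → r x y) : ReflTransGen r w u := by
  induction p with
  | nil w => exact .refl
  | cons e _ ih =>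
    exact .head (hr _ _ _ List.mem_cons_self e)
      (ih fun x y c hc => hr x y c (List.mem_cons_of_mem _ hc))

theorem Cond4.reflTransGen (h : Cond4 R w u) :
    ReflTransGen (fun x y => (x, y) ∈ R) w u := by
  obtain ⟨s, p, hs⟩ := h
  refine p.reflTransGen fun x y c hc e => ?_
  simpa [IEdge, eq_of_mem_of_langB_S4sys hs c hc] using e

/-- One step along which domain atoms propagate: from `x` to `y` when `x ≤ y` (rule `(nd)`) and,
for constant domains, also when `y ≤ x` (rule `(cd)`). -/
def DomStep (cd : Bool) (R : Multiset (ℕ × ℕ)) (x y : ℕ) : Prop :=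
  (x, y) ∈ R ∨ cd = true ∧ (y, x) ∈ R

theorem CondD.reflTransGen (h : CondD cd R w u) : ReflTransGen (DomStep cd R) w u := by
  cases cd with
  | false => exact (Cond4.reflTransGen h).lift id fun _ _ => .inl
  | true =>
    obtain ⟨s, p, -⟩ := h
    refine p.reflTransGen fun x y c _ e => ?_
    cases c with
    | false => exact .inr ⟨rfl, by simpa [IEdge] using e⟩
    | true => exact .inl (by simpa [IEdge] using e)

end Propagation

section Labels

variable {R D : Multiset (ℕ × ℕ)} {Γ Δ : LSeq} {v w u a : ℕ} {φ : IFml}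

@[simp]
theorem loccurs_rel_cons :
    loccurs v ((w, u) ::ₘ R) D Γ Δ ↔ v = w ∨ v = u ∨ loccurs v R D Γ Δ := by
  simp only [loccurs, Multiset.mem_cons, Prod.mk.injEq, or_and_right, and_assoc, exists_or,
    exists_and_left, exists_eq_left, or_assoc]

@[simp]
theorem loccurs_dom_cons :
    loccurs v R ((a, w) ::ₘ D) Γ Δ ↔ v = w ∨ loccurs v R D Γ Δ := by
  simp only [loccurs, Multiset.mem_cons, Prod.mk.injEq]
  grind

@[simp]
theorem loccurs_left_cons :
    loccurs v R D ((w, φ) ::ₘ Γ) Δ ↔ v = w ∨ loccurs v R D Γ Δ := by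
  simp only [loccurs, Multiset.mem_cons, Prod.mk.injEq]
  grind

@[simp]
theorem loccurs_right_cons :
    loccurs v R D Γ ((w, φ) ::ₘ Δ) ↔ v = w ∨ loccurs v R D Γ Δ := by
  simp only [loccurs, Multiset.mem_cons, Prod.mk.injEq]
  grind

theorem loccurs_left_of_rel (h : (w, u) ∈ R) : loccurs w R D Γ Δ :=
  .inl ⟨w, u, h, .inl rfl⟩

theorem loccurs_right_of_rel (h : (w, u) ∈ R) : loccurs u R D Γ Δ :=
  .inl ⟨w, u, h, .inr rfl⟩

theorem DomStep.loccurs_right {cd : Bool} (h : DomStep cd R w u) : loccurs u R D Γ Δ :=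
  h.elim loccurs_right_of_rel fun h => loccurs_left_of_rel h.2

end Labels

/-- `R', D'` extends the atoms `R, D` of the sequent `R, D, Γ ⊢ Δ` without introducing new labels or
new parameters. Inclusion is that of sets, so that multiplicities play no role. -/
structure AtomExtension (Γ Δ : LSeq) (R D R' D' : Multiset (ℕ × ℕ)) : Prop where
  rel_subset : R ⊆ R'
  dom_subset : D ⊆ D'
  loccurs_of_ext : ∀ v, loccurs v R' D' Γ Δ → loccurs v R D Γ Δ
  exists_dom : ∀ a w, (a, w) ∈ D' → ∃ u, (a, u) ∈ D

namespace AtomExtension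

variable {Γ Δ Γ₁ Δ₁ : LSeq} {R D R' D' R'' D'' : Multiset (ℕ × ℕ)} {w u a : ℕ}

theorem refl : AtomExtension Γ Δ R D R D :=
  ⟨fun _ => id, fun _ => id, fun _ => id, fun _ w h => ⟨w, h⟩⟩

theorem trans (e : AtomExtension Γ Δ R D R' D') (e' : AtomExtension Γ Δ R' D' R'' D'') :
    AtomExtension Γ Δ R D R'' D'' where
  rel_subset _ h := e'.rel_subset (e.rel_subset h)
  dom_subset _ h := e'.dom_subset (e.dom_subset h)
  loccurs_of_ext v h := e.loccurs_of_ext v (e'.loccurs_of_ext v h)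
  exists_dom a w h := (e'.exists_dom a w h).elim (e.exists_dom a)

theorem change_formulas (e : AtomExtension Γ Δ R D R' D')
    (h : ∀ v, loccurs v R D Γ Δ → loccurs v R D Γ₁ Δ₁) : AtomExtension Γ₁ Δ₁ R D R' D' where
  rel_subset := e.rel_subset
  dom_subset := e.dom_subset
  loccurs_of_ext v := by
    rintro (hR | hD | hΓΔ)
    · exact h v (e.loccurs_of_ext v (.inl hR))
    · exact h v (e.loccurs_of_ext v (.inr (.inl hD)))
    · exact .inr (.inr hΓΔ)
  exists_dom := e.exists_dom

theorem cons_rel (e : AtomExtension Γ Δ R D R' D') :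
    AtomExtension Γ Δ ((w, u) ::ₘ R) D ((w, u) ::ₘ R') D' where
  rel_subset := Multiset.cons_subset_cons e.rel_subset
  dom_subset := e.dom_subset
  loccurs_of_ext v := by
    simpa only [loccurs_rel_cons] using Or.imp_right (Or.imp_right (e.loccurs_of_ext v))
  exists_dom := e.exists_dom

theorem cons_dom (e : AtomExtension Γ Δ R D R' D') :
    AtomExtension Γ Δ R ((a, w) ::ₘ D) R' ((a, w) ::ₘ D') where
  rel_subset := e.rel_subset
  dom_subset := Multiset.cons_subset_cons e.dom_subset
  loccurs_of_ext v := by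
    simpa only [loccurs_dom_cons] using Or.imp_right (e.loccurs_of_ext v)
  exists_dom b v hb := by
    rcases Multiset.mem_cons.1 hb with heq | hb
    · exact ⟨v, heq ▸ Multiset.mem_cons_self _ _⟩
    · exact (e.exists_dom b v hb).imp fun _ => Multiset.mem_cons_of_mem

theorem rel_cons_self (hw : loccurs w R D Γ Δ) (hu : loccurs u R D Γ Δ) :
    AtomExtension Γ Δ R D ((w, u) ::ₘ R) D where
  rel_subset := Multiset.subset_cons _ _
  dom_subset _ := id
  loccurs_of_ext v := by
    rw [loccurs_rel_cons]
    rintro (rfl | rfl | h) <;> assumption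
  exists_dom _ v h := ⟨v, h⟩

theorem dom_cons_self (ha : (a, u) ∈ D) (hw : loccurs w R D Γ Δ) :
    AtomExtension Γ Δ R D R ((a, w) ::ₘ D) where
  rel_subset _ := id
  dom_subset := Multiset.subset_cons _ _
  loccurs_of_ext v := by
    rw [loccurs_dom_cons]
    rintro (rfl | h) <;> assumption
  exists_dom b v hb := by
    rcases Multiset.mem_cons.1 hb with heq | hb
    · exact ⟨u, (Prod.mk.inj heq).1 ▸ ha⟩
    · exact ⟨v, hb⟩

theorem dom_of_cons (ha : (a, w) ∈ D) : AtomExtension Γ Δ R ((a, w) ::ₘ D) R D where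
  rel_subset _ := id
  dom_subset := Multiset.cons_subset.2 ⟨ha, Multiset.Subset.refl D⟩
  loccurs_of_ext _ h := loccurs_dom_cons.2 (.inr h)
  exists_dom _ v h := ⟨v, Multiset.mem_cons_of_mem h⟩

theorem not_loccurs (e : AtomExtension Γ Δ R D R' D') (h : ¬ loccurs w R D Γ Δ) :
    ¬ loccurs w R' D' Γ Δ :=
  mt (e.loccurs_of_ext w) h

theorem not_poccurs (e : AtomExtension Γ Δ R D R' D') (h : ¬ poccurs a D Γ Δ) :
    ¬ poccurs a D' Γ Δ :=
  mt (Or.imp_left fun ⟨w, hw⟩ => e.exists_dom a w hw) h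

end AtomExtension

theorem G3.contract_dom {cd : Bool} {R D : Multiset (ℕ × ℕ)} {Γ Δ : LSeq} {w : ℕ}
    (hw : (w, w) ∈ R) {as : List ℕ} (has : ∀ a ∈ as, (a, w) ∈ D)
    (h : G3 cd R (↑(as.map fun a => (a, w)) + D) Γ Δ) : G3 cd R D Γ Δ := by
  induction as with
  | nil => simpa using h
  | cons a as ih =>
    obtain ⟨ha, has⟩ := List.forall_mem_cons.1 has
    refine ih has ?_
    have ha' : (a, w) ∈ (↑(as.map fun a => (a, w)) + D : Multiset (ℕ × ℕ)) :=
      Multiset.mem_add.2 (.inr ha)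
    obtain ⟨R₀, rfl⟩ := Multiset.exists_cons_of_mem hw
    obtain ⟨D₀, hD₀⟩ := Multiset.exists_cons_of_mem ha'
    rw [List.map_cons, ← Multiset.cons_coe, Multiset.cons_add, hD₀] at h
    exact hD₀ ▸ IDer.nd trivial h

/-- `R, D, Γ ⊢ Δ` is stably derivable if it is derivable in `G3IntQ(C)` after any extension of its
atoms that introduces no new labels or parameters. This is the induction hypothesis under which
weakening by relational and domain atoms comes for free. -/
def StablyDerivable (cd : Bool) (R D : Multiset (ℕ × ℕ)) (Γ Δ : LSeq) : Prop :=
  ∀ ⦃R' D' : Multiset (ℕ × ℕ)⦄, AtomExtension Γ Δ R D R' D' → G3 cd R' D' Γ Δ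

namespace StablyDerivable

variable {cd : Bool} {R D R' D' : Multiset (ℕ × ℕ)} {Γ Δ : LSeq} {w u v a : ℕ} {φ ψ : IFml}

theorem g3 (h : StablyDerivable cd R D Γ Δ) : G3 cd R D Γ Δ :=
  h .refl

theorem weaken (h : StablyDerivable cd R D Γ Δ) (e : AtomExtension Γ Δ R D R' D') :
    StablyDerivable cd R' D' Γ Δ :=
  fun _ _ e' => h (e.trans e')

theorem ref (h : StablyDerivable cd ((w, w) ::ₘ R) D Γ Δ) : StablyDerivable cd R D Γ Δ :=
  fun _ _ e => IDer.ref trivial (h e.cons_rel)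

theorem tra (hwu : (w, u) ∈ R) (huv : (u, v) ∈ R)
    (h : StablyDerivable cd ((w, v) ::ₘ R) D Γ Δ) : StablyDerivable cd R D Γ Δ := by
  intro R' D' e
  have h' : G3 cd ((w, v) ::ₘ R') D' Γ Δ := h e.cons_rel
  obtain ⟨R₁, rfl⟩ := Multiset.exists_cons_of_mem (e.rel_subset hwu)
  rcases Multiset.mem_cons.1 (e.rel_subset huv) with heq | huR
  -- The rule `(tra)` needs two occurrences of atoms; a single loop `w ≤ w` is covered by `(ref)`.
  · obtain ⟨rfl, rfl⟩ := Prod.mk.inj heq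
    exact IDer.ref trivial h'
  · obtain ⟨R₂, rfl⟩ := Multiset.exists_cons_of_mem huR
    apply IDer.tra trivial
    rwa [Multiset.cons_swap (u, v), Multiset.cons_swap (w, u)]

theorem nd (hwu : (w, u) ∈ R) (ha : (a, w) ∈ D)
    (h : StablyDerivable cd R ((a, u) ::ₘ D) Γ Δ) : StablyDerivable cd R D Γ Δ := by
  intro R' D' e
  have h' : G3 cd R' ((a, u) ::ₘ D') Γ Δ := h e.cons_dom
  obtain ⟨R₁, rfl⟩ := Multiset.exists_cons_of_mem (e.rel_subset hwu)
  obtain ⟨D₁, rfl⟩ := Multiset.exists_cons_of_mem (e.dom_subset ha)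
  exact IDer.nd trivial (Multiset.cons_swap _ _ D₁ ▸ h')

theorem cdr (hcd : cd = true) (hwu : (w, u) ∈ R) (ha : (a, u) ∈ D)
    (h : StablyDerivable cd R ((a, w) ::ₘ D) Γ Δ) : StablyDerivable cd R D Γ Δ := by
  intro R' D' e
  have h' : G3 cd R' ((a, w) ::ₘ D') Γ Δ := h e.cons_dom
  obtain ⟨R₁, rfl⟩ := Multiset.exists_cons_of_mem (e.rel_subset hwu)
  obtain ⟨D₁, rfl⟩ := Multiset.exists_cons_of_mem (e.dom_subset ha)
  exact IDer.cdr trivial hcd (Multiset.cons_swap _ _ D₁ ▸ h')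

theorem ned (ha : ¬ poccurs a D Γ Δ) (h : StablyDerivable cd R ((a, w) ::ₘ D) Γ Δ) :
    StablyDerivable cd R D Γ Δ :=
  fun _ _ e => IDer.ned trivial (e.not_poccurs ha) (h e.cons_dom)

theorem of_reflTransGen_rel (hwu : ReflTransGen (fun x y => (x, y) ∈ R) w u)
    (h : StablyDerivable cd ((w, u) ::ₘ R) D Γ Δ) : StablyDerivable cd R D Γ Δ := by
  induction hwu using ReflTransGen.head_induction_on with
  | refl => exact h.ref
  | @head w x hwx _ ih =>
    refine ih (tra (Multiset.mem_cons_of_mem hwx) (Multiset.mem_cons_self _ _) ?_)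
    have hx : loccurs x R D Γ Δ := loccurs_right_of_rel hwx
    exact Multiset.cons_swap _ _ R ▸ h.weaken (.rel_cons_self (by simp [hx]) (by simp))

theorem of_domStep {x : ℕ} (hux : DomStep cd R u x) (ha : (a, u) ∈ D)
    (h : StablyDerivable cd R ((a, x) ::ₘ D) Γ Δ) : StablyDerivable cd R D Γ Δ :=
  hux.elim (fun hux => nd hux ha h) fun ⟨hcd, hxu⟩ => cdr hcd hxu ha h

theorem of_reflTransGen_domStep (huw : ReflTransGen (DomStep cd R) u w) (ha : (a, u) ∈ D)
    (h : StablyDerivable cd R ((a, w) ::ₘ D) Γ Δ) : StablyDerivable cd R D Γ Δ := by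
  induction huw using ReflTransGen.head_induction_on generalizing D with
  | refl => exact h.weaken (.dom_of_cons ha)
  | @head u x hux _ ih =>
    refine of_domStep hux ha (ih (Multiset.mem_cons_self _ _) ?_)
    exact Multiset.cons_swap _ _ D ▸
      h.weaken (.dom_cons_self (Multiset.mem_cons_of_mem ha) hux.loccurs_right)

theorem of_reflTransGen_domStep_list {aus : List (ℕ × ℕ)}
    (haus : ∀ p ∈ aus, p ∈ D ∧ ReflTransGen (DomStep cd R) p.2 w)
    (h : StablyDerivable cd R (↑(aus.map fun p => (p.1, w)) + D) Γ Δ) :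
    StablyDerivable cd R D Γ Δ := by
  induction aus with
  | nil => simpa using h
  | cons p aus ih =>
    obtain ⟨⟨hp, hpath⟩, haus⟩ := List.forall_mem_cons.1 haus
    refine ih haus (of_reflTransGen_domStep hpath (Multiset.mem_add.2 (.inr hp)) ?_)
    simpa only [List.map_cons, ← Multiset.cons_coe, Multiset.cons_add] using h

theorem botl : StablyDerivable cd R D ((w, IFml.bot) ::ₘ Γ) Δ :=
  fun _ _ _ => IDer.botl _ _ _ _ _

theorem andl (h : StablyDerivable cd R D ((w, φ) ::ₘ (w, ψ) ::ₘ Γ) Δ) :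
    StablyDerivable cd R D ((w, IFml.and φ ψ) ::ₘ Γ) Δ :=
  fun _ _ e => IDer.andl (h (e.change_formulas (by simp)))

theorem andr (h₁ : StablyDerivable cd R D Γ ((w, φ) ::ₘ Δ))
    (h₂ : StablyDerivable cd R D Γ ((w, ψ) ::ₘ Δ)) :
    StablyDerivable cd R D Γ ((w, IFml.and φ ψ) ::ₘ Δ) :=
  fun _ _ e => IDer.andr (h₁ (e.change_formulas (by simp))) (h₂ (e.change_formulas (by simp)))

theorem orl (h₁ : StablyDerivable cd R D ((w, φ) ::ₘ Γ) Δ)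
    (h₂ : StablyDerivable cd R D ((w, ψ) ::ₘ Γ) Δ) :
    StablyDerivable cd R D ((w, IFml.or φ ψ) ::ₘ Γ) Δ :=
  fun _ _ e => IDer.orl (h₁ (e.change_formulas (by simp))) (h₂ (e.change_formulas (by simp)))

theorem orr (h : StablyDerivable cd R D Γ ((w, φ) ::ₘ (w, ψ) ::ₘ Δ)) :
    StablyDerivable cd R D Γ ((w, IFml.or φ ψ) ::ₘ Δ) :=
  fun _ _ e => IDer.orr (h (e.change_formulas (by simp)))

theorem impr (hu : ¬ loccurs u R D Γ ((w, IFml.imp φ ψ) ::ₘ Δ))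
    (h : StablyDerivable cd ((w, u) ::ₘ R) D ((u, φ) ::ₘ Γ) ((u, ψ) ::ₘ Δ)) :
    StablyDerivable cd R D Γ ((w, IFml.imp φ ψ) ::ₘ Δ) :=
  fun _ _ e => IDer.impr (e.not_loccurs hu) <| h <| e.cons_rel.change_formulas fun _ => by
    simp only [loccurs_rel_cons, loccurs_left_cons, loccurs_right_cons]
    tauto

theorem exl (ha : ¬ poccurs a D ((w, IFml.ex φ) ::ₘ Γ) Δ)
    (h : StablyDerivable cd R ((a, w) ::ₘ D) ((w, open0 φ a) ::ₘ Γ) Δ) :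
    StablyDerivable cd R D ((w, IFml.ex φ) ::ₘ Γ) Δ :=
  fun _ _ e => IDer.exl (e.not_poccurs ha) (h (e.cons_dom.change_formulas (by simp)))

theorem allr (hu : ¬ loccurs u R D Γ ((w, IFml.all φ) ::ₘ Δ))
    (ha : ¬ poccurs a D Γ ((w, IFml.all φ) ::ₘ Δ))
    (h : StablyDerivable cd ((w, u) ::ₘ R) ((a, u) ::ₘ D) Γ ((u, open0 φ a) ::ₘ Δ)) :
    StablyDerivable cd R D Γ ((w, IFml.all φ) ::ₘ Δ) :=
  fun _ _ e => IDer.allr (e.not_loccurs hu) (e.not_poccurs ha)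
    (h (e.cons_rel.cons_dom.change_formulas (by simp)))

theorem id {P : ℕ} {as : List ℕ} (hwu : (w, u) ∈ R) (has : ∀ a ∈ as, (a, w) ∈ D) :
    StablyDerivable cd R D ((w, IFml.atom P (as.map ITerm.param)) ::ₘ Γ)
      ((u, IFml.atom P (as.map ITerm.param)) ::ₘ Δ) := by
  intro R' D' e
  obtain ⟨R₁, rfl⟩ := Multiset.exists_cons_of_mem (e.rel_subset hwu)
  -- `(id)` consumes one domain atom for each occurrence in `as`; the loop at `w` allows `(nd)` to
  -- supply the copies.
  refine IDer.ref trivial (w := w) (G3.contract_dom (Multiset.mem_cons_self _ _)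
    (fun a ha => e.dom_subset (has a ha)) ?_)
  rw [Multiset.cons_swap]
  exact IDer.id trivial w u P as

theorem impl (hwu : (w, u) ∈ R)
    (h₁ : StablyDerivable cd R D ((w, IFml.imp φ ψ) ::ₘ Γ) ((u, φ) ::ₘ Δ))
    (h₂ : StablyDerivable cd R D ((w, IFml.imp φ ψ) ::ₘ (u, ψ) ::ₘ Γ) Δ) :
    StablyDerivable cd R D ((w, IFml.imp φ ψ) ::ₘ Γ) Δ := by
  intro R' D' e
  obtain ⟨R₁, rfl⟩ := Multiset.exists_cons_of_mem (e.rel_subset hwu)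
  refine IDer.impl trivial (h₁ (e.change_formulas fun _ => ?_))
    (h₂ (e.change_formulas fun _ => ?_))
  · simp only [loccurs_left_cons, loccurs_right_cons]
    tauto
  · simp only [loccurs_left_cons]
    tauto

theorem exr (ha : (a, w) ∈ D)
    (h : StablyDerivable cd R D Γ ((w, open0 φ a) ::ₘ (w, IFml.ex φ) ::ₘ Δ)) :
    StablyDerivable cd R D Γ ((w, IFml.ex φ) ::ₘ Δ) := by
  intro R' D' e
  obtain ⟨D₁, rfl⟩ := Multiset.exists_cons_of_mem (e.dom_subset ha)
  exact IDer.exr trivial (h (e.change_formulas (by simp)))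

theorem alll (hwu : (w, u) ∈ R) (ha : (a, u) ∈ D)
    (h : StablyDerivable cd R D ((w, IFml.all φ) ::ₘ (u, open0 φ a) ::ₘ Γ) Δ) :
    StablyDerivable cd R D ((w, IFml.all φ) ::ₘ Γ) Δ := by
  intro R' D' e
  have h' : G3 cd R' D' ((w, IFml.all φ) ::ₘ (u, open0 φ a) ::ₘ Γ) Δ :=
    h <| e.change_formulas fun _ => by
      simp only [loccurs_left_cons]
      tauto
  obtain ⟨R₁, rfl⟩ := Multiset.exists_cons_of_mem (e.rel_subset hwu)
  obtain ⟨D₁, rfl⟩ := Multiset.exists_cons_of_mem (e.dom_subset ha)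
  exact IDer.alll trivial (Multiset.cons_swap _ _ Γ ▸ h')

theorem idN {P : ℕ} {aus : List (ℕ × ℕ)} (haus : ∀ p ∈ aus, p ∈ D ∧ CondD cd R p.2 w)
    (hwu : Cond4 R w u) :
    StablyDerivable cd R D ((w, IFml.atom P (aus.map fun p => ITerm.param p.1)) ::ₘ Γ)
      ((u, IFml.atom P (aus.map fun p => ITerm.param p.1)) ::ₘ Δ) := by
  refine of_reflTransGen_domStep_list (fun p hp => (haus p hp).imp_right CondD.reflTransGen)
    (of_reflTransGen_rel hwu.reflTransGen ?_)
  rw [← Function.comp_def ITerm.param Prod.fst, ← List.map_map]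
  refine id (Multiset.mem_cons_self _ _) fun a ha => Multiset.mem_add.2 (.inl ?_)
  obtain ⟨p, hp, rfl⟩ := List.mem_map.1 ha
  exact Multiset.mem_coe.2 (List.mem_map.2 ⟨p, hp, rfl⟩)

theorem prImp (hwu : Cond4 R w u)
    (h₁ : StablyDerivable cd R D ((w, IFml.imp φ ψ) ::ₘ Γ) ((u, φ) ::ₘ Δ))
    (h₂ : StablyDerivable cd R D ((w, IFml.imp φ ψ) ::ₘ (u, ψ) ::ₘ Γ) Δ) :
    StablyDerivable cd R D ((w, IFml.imp φ ψ) ::ₘ Γ) Δ :=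
  of_reflTransGen_rel hwu.reflTransGen <| impl (Multiset.mem_cons_self _ _)
    (h₁.weaken (.rel_cons_self (by simp) (by simp)))
    (h₂.weaken (.rel_cons_self (by simp) (by simp)))

theorem exr1 (huw : CondD cd R u w) (ha : (a, u) ∈ D)
    (h : StablyDerivable cd R D Γ ((w, open0 φ a) ::ₘ (w, IFml.ex φ) ::ₘ Δ)) :
    StablyDerivable cd R D Γ ((w, IFml.ex φ) ::ₘ Δ) :=
  of_reflTransGen_domStep huw.reflTransGen ha <|
    exr (Multiset.mem_cons_self _ _) (h.weaken (.dom_cons_self ha (by simp)))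

theorem alll1 (huv : CondD cd R u v) (hwv : Cond4 R w v) (ha : (a, u) ∈ D)
    (h : StablyDerivable cd R D ((w, IFml.all φ) ::ₘ (v, open0 φ a) ::ₘ Γ) Δ) :
    StablyDerivable cd R D ((w, IFml.all φ) ::ₘ Γ) Δ :=
  of_reflTransGen_domStep huv.reflTransGen ha <| of_reflTransGen_rel hwv.reflTransGen <|
    alll (Multiset.mem_cons_self _ _) (Multiset.mem_cons_self _ _) <|
      (h.weaken (.dom_cons_self ha (by simp))).weaken (.rel_cons_self (by simp) (by simp))

end StablyDerivable

theorem IDer.stablyDerivable {cd : Bool} {gOld gStr gNew : Prop} {R D : Multiset (ℕ × ℕ)}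
    {Γ Δ : LSeq} (h : IDer cd gOld gStr gNew R D Γ Δ) : StablyDerivable cd R D Γ Δ := by
  induction h with
  | botl => exact .botl
  | andl _ ih => exact ih.andl
  | andr _ _ ih₁ ih₂ => exact ih₁.andr ih₂
  | orl _ _ ih₁ ih₂ => exact ih₁.orl ih₂
  | orr _ ih => exact ih.orr
  | impr hu _ ih => exact ih.impr hu
  | exl ha _ ih => exact ih.exl ha
  | allr hu ha _ ih => exact ih.allr hu ha
  | id => exact .id (by simp) (by simp +contextual)
  | impl _ _ _ ih₁ ih₂ => exact ih₁.impl (by simp) ih₂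
  | exr _ _ ih => exact ih.exr (by simp)
  | alll _ _ ih => exact .alll (by simp) (by simp) (Multiset.cons_swap _ _ _ ▸ ih)
  | ref _ _ ih => exact ih.ref
  | @tra _ R _ _ _ w u v _ ih =>
    refine .tra (w := w) (u := u) (v := v) (by simp) (by simp) ?_
    rwa [Multiset.cons_swap (w, v), Multiset.cons_swap (w, v)]
  | nd _ _ ih => exact .nd (Multiset.mem_cons_self _ _) (Multiset.mem_cons_self _ _) <|
      (Multiset.cons_swap _ _ _ ▸ ih)
  | ned _ ha _ ih => exact ih.ned ha
  | cdr _ hcd _ ih => exact .cdr hcd (Multiset.mem_cons_self _ _) (Multiset.mem_cons_self _ _) <|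
      (Multiset.cons_swap _ _ _ ▸ ih)
  | idN _ w u P aus haus hwu => exact .idN (fun p hp => ⟨by simp [hp], haus p hp⟩) hwu
  | prImp _ hwu _ _ ih₁ ih₂ => exact ih₁.prImp hwu ih₂
  | exr1 _ huw _ ih => exact ih.exr1 huw (by simp)
  | exr2 _ huw ha _ ih => exact .ned ha (ih.exr1 huw (by simp))
  | alll1 _ huv hwv _ ih => exact ih.alll1 huv hwv (by simp)
  | alll2 _ huv hwv ha _ ih => exact .ned ha (ih.alll1 huv hwv (by simp))

theorem quasi_refined_to_g3_general {cd : Bool} {gOld gStr gNew : Prop} {R D : Multiset (ℕ × ℕ)}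
    {Γ Δ : LSeq} (h : IDer cd gOld gStr gNew R D Γ Δ) : IDer cd True True False R D Γ Δ :=
  h.stablyDerivable.g3

/-- Every labelled sequent derivable in the quasi-refined
calculus `IntQL*` is derivable in `G3IntQ`, and every labelled sequent derivable
in `IntQCL*` is derivable in `G3IntQC`. -/
theorem quasi_refined_to_g3 :
    (∀ (Rle Dom : Multiset (ℕ × ℕ)) (Γ Δ : LSeq),
        IDer false False False True Rle Dom Γ Δ →
        IDer false True True False Rle Dom Γ Δ) ∧
    (∀ (Rle Dom : Multiset (ℕ × ℕ)) (Γ Δ : LSeq),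
        IDer true False False True Rle Dom Γ Δ →
        IDer true True True False Rle Dom Γ Δ) := by
  exact ⟨fun _ _ _ _ => quasi_refined_to_g3_general, fun _ _ _ _ => quasi_refined_to_g3_general⟩

end IntFOL
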